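/- arXiv:2403.09902 — 2 statements merged into one kernel-verified Lean document; each statement's English description precedes it below -/
import Mathlib

section
/- Let n ≥ 2 and let Φ be a C²-anisotropy on ℝⁿ. Then Φ is elliptic if and only if for every pair of distinct points x, y ∈ ℝⁿ such that the line {x + t(y − x) : t ∈ ℝ} does not pass through the origin, the function h(t) := Φ(x + t(y − x)) is twice differentiable on [0,1] with h''(t) > 0 for every t ∈ [0,1]. (Proposition A.2, equivalence (a) ⇔ (e).) -/
/-- An anisotropy on ℝⁿ: a convex, even, positively one-homogeneous function with
linear upper and lower bounds. -/
def IsAnisotropy {n : ℕ} (Φ : EuclideanSpace ℝ (Fin n) → ℝ) : Prop :=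
  ConvexOn ℝ Set.univ Φ ∧ (∀ x, Φ (-x) = Φ x) ∧
    (∀ c : ℝ, 0 < c → ∀ x, Φ (c • x) = c * Φ x) ∧
    ∃ cl cu : ℝ, 0 < cl ∧ cl ≤ cu ∧ ∀ x, cl * ‖x‖ ≤ Φ x ∧ Φ x ≤ cu * ‖x‖

/-- A `C^k`-anisotropy: an anisotropy that is `k` times continuously differentiable
away from the origin. -/
def IsCAnisotropy {n : ℕ} (k : ℕ) (Φ : EuclideanSpace ℝ (Fin n) → ℝ) : Prop :=
  IsAnisotropy Φ ∧ ContDiffOn ℝ k Φ {(0 : EuclideanSpace ℝ (Fin n))}ᶜ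

/-- An anisotropy is elliptic if `Φ - γ‖·‖` is convex for some `γ > 0`. -/
def IsElliptic {n : ℕ} (Φ : EuclideanSpace ℝ (Fin n) → ℝ) : Prop :=
  ∃ γ : ℝ, 0 < γ ∧ ConvexOn ℝ Set.univ (fun x => Φ x - γ * ‖x‖)

/-- The second derivative of `Φ` at `x`, as a bilinear form evaluated at `(y, z)`. -/
noncomputable def D2 {n : ℕ} (Φ : EuclideanSpace ℝ (Fin n) → ℝ)
    (x y z : EuclideanSpace ℝ (Fin n)) : ℝ :=
  fderiv ℝ (fun w => fderiv ℝ Φ w) x y z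

/-!
For a positively one-homogeneous `F` that is `C²` off the origin, `D²F p` annihilates `p` and scales
like `‖p‖⁻¹`, so it is determined by its values `D²F u e e` on pairs of orthogonal unit vectors,
which are `1` for the norm. If they are all positive, they have a positive lower bound `γ` by
compactness, and then the second derivative of `F - γ‖·‖` is nonnegative off the origin. Hence
`F - γ‖·‖` is convex on every line avoiding the origin; in dimension at least two, every line is a
limit of such lines, so that `F - γ‖·‖` is convex.
-/

open Filter Set Topology
open scoped RealInnerProductSpace

section Calculus

variable {𝕜 : Type*} [NontriviallyNormedField 𝕜] {E : Type*} [NormedAddCommGroup E]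
  [NormedSpace 𝕜 E] {W : Type*} [NormedAddCommGroup W] [NormedSpace 𝕜 W] {F : E → W} {p x v : E}
  {t : 𝕜}

lemma contDiffAt_of_contDiffOn_compl_zero {m : WithTop ℕ∞} (hF : ContDiffOn 𝕜 m F {0}ᶜ)
    (hp : p ≠ 0) : ContDiffAt 𝕜 m F p :=
  hF.contDiffAt (isOpen_compl_singleton.mem_nhds hp)

lemma hasDerivAt_add_smul (x v : E) (t : 𝕜) : HasDerivAt (fun s : 𝕜 => x + s • v) v t := by
  simpa using ((hasDerivAt_id t).smul_const v).const_add x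

lemma hasDerivAt_comp_add_smul (hF : DifferentiableAt 𝕜 F (x + t • v)) :
    HasDerivAt (fun s : 𝕜 => F (x + s • v)) (fderiv 𝕜 F (x + t • v) v) t :=
  hF.hasFDerivAt.comp_hasDerivAt t (hasDerivAt_add_smul x v t)

lemma differentiableAt_fderiv_of_contDiffAt_two (hF : ContDiffAt 𝕜 2 F p) :
    DifferentiableAt 𝕜 (fderiv 𝕜 F) p :=
  (hF.fderiv_right (m := 1) (by norm_num)).differentiableAt one_ne_zero

lemma hasDerivAt_deriv_comp_add_smul (hF : ContDiffAt 𝕜 2 F (x + t • v)) :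
    HasDerivAt (deriv fun s : 𝕜 => F (x + s • v)) (fderiv 𝕜 (fderiv 𝕜 F) (x + t • v) v v) t := by
  have hline := hasDerivAt_add_smul x v t
  have hderiv : (deriv fun s : 𝕜 => F (x + s • v)) =ᶠ[𝓝 t] fun s => fderiv 𝕜 F (x + s • v) v := by
    filter_upwards [hline.continuousAt.eventually (hF.eventually (by simp))] with s hs
    exact (hasDerivAt_comp_add_smul (hs.differentiableAt two_ne_zero)).deriv
  have hsnd := (differentiableAt_fderiv_of_contDiffAt_two hF).hasFDerivAt.comp_hasDerivAt t hline
  simpa using (hsnd.clm_apply (hasDerivAt_const t v)).congr_of_eventuallyEq hderiv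

lemma fderiv_fderiv_sub_const_mul {F G : E → 𝕜} (hF : ContDiffAt 𝕜 2 F p)
    (hG : ContDiffAt 𝕜 2 G p) (γ : 𝕜) :
    fderiv 𝕜 (fderiv 𝕜 fun x => F x - γ * G x) p =
      fderiv 𝕜 (fderiv 𝕜 F) p - γ • fderiv 𝕜 (fderiv 𝕜 G) p := by
  have hfst : fderiv 𝕜 (fun x => F x - γ * G x) =ᶠ[𝓝 p]
      fun q => fderiv 𝕜 F q - γ • fderiv 𝕜 G q := by
    filter_upwards [hF.eventually (by simp), hG.eventually (by simp)] with q hFq hGq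
    exact ((hFq.differentiableAt two_ne_zero).hasFDerivAt.sub
      ((hGq.differentiableAt two_ne_zero).hasFDerivAt.const_mul γ)).fderiv
  rw [hfst.fderiv_eq]
  exact ((differentiableAt_fderiv_of_contDiffAt_two hF).hasFDerivAt.sub
    ((differentiableAt_fderiv_of_contDiffAt_two hG).hasFDerivAt.const_smul γ)).fderiv

end Calculus

section Line

lemma ne_smul_of_forall_add_smul_ne_zero {K V : Type*} [Field K] [AddCommGroup V]
    [Module K V] {x v : V} (hv : v ≠ 0) (hline : ∀ t : K, x + t • v ≠ 0) (t a : K) :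
    v ≠ a • (x + t • v) := by
  intro h
  have ha : a ≠ 0 := by
    rintro rfl
    exact hv (by simpa using h)
  apply hline (t - a⁻¹)
  rw [sub_smul, (inv_smul_eq_iff₀ ha).2 h]
  abel

lemma exists_notMem_span_singleton {K V : Type*} [Field K] [AddCommGroup V] [Module K V]
    (hV : 1 < Module.rank K V) (v : V) : ∃ w, w ∉ Submodule.span K {v} := by
  by_contra! hspan
  have htop : Submodule.span K {v} = ⊤ := Submodule.eq_top_iff'.2 hspan
  have hrank := rank_span_le (R := K) {v}
  rw [htop, rank_top, Cardinal.mk_singleton] at hrank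
  exact hrank.not_gt hV

lemma convexOn_univ_of_forall_line_ne_zero {E : Type*} [AddCommGroup E] [Module ℝ E]
    [TopologicalSpace E] [ContinuousAdd E] [ContinuousSMul ℝ E] {F : E → ℝ}
    (hE : 1 < Module.rank ℝ E) (hF : Continuous F)
    (hconv : ∀ x v : E, (∀ t : ℝ, x + t • v ≠ 0) → ConvexOn ℝ univ fun t : ℝ => F (x + t • v)) :
    ConvexOn ℝ univ F := by
  refine ⟨convex_univ, fun x _ y _ a b ha hb hab => ?_⟩
  obtain ⟨v, rfl⟩ : ∃ v, y = x + v := ⟨y - x, by abel⟩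
  have hcomb : a • x + b • (x + v) = x + b • v := by
    rw [smul_add, ← add_assoc, ← add_smul, hab, one_smul]
  rw [hcomb]
  have jensen (z : E) (hz : ∀ t : ℝ, z + t • v ≠ 0) :
      F (z + b • v) ≤ a • F z + b • F (z + v) := by
    simpa using (hconv z v hz).2 (mem_univ 0) (mem_univ 1) ha hb hab
  by_cases hline : ∀ t : ℝ, x + t • v ≠ 0
  · exact jensen x hline
  · push Not at hline
    obtain ⟨t₀, ht₀⟩ := hline
    obtain ⟨w, hw⟩ := exists_notMem_span_singleton hE v
    have hshift (ε : ℝ) (hε : ε ≠ 0) (t : ℝ) : x + ε • w + t • v ≠ 0 := by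
      intro h
      apply hw
      refine Submodule.mem_span_singleton.2 ⟨ε⁻¹ * (t₀ - t), ?_⟩
      rw [mul_smul, inv_smul_eq_iff₀ hε]
      linear_combination (norm := module) ht₀ - h
    have hleft : Tendsto (fun ε : ℝ => F (x + ε • w + b • v)) (𝓝[≠] 0) (𝓝 (F (x + b • v))) := by
      have : Continuous fun ε : ℝ => F (x + ε • w + b • v) := by fun_prop
      simpa using (this.tendsto 0).mono_left nhdsWithin_le_nhds
    have hright : Tendsto (fun ε : ℝ => a • F (x + ε • w) + b • F (x + ε • w + v)) (𝓝[≠] 0)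
        (𝓝 (a • F x + b • F (x + v))) := by
      have : Continuous fun ε : ℝ => a • F (x + ε • w) + b • F (x + ε • w + v) := by fun_prop
      simpa using (this.tendsto 0).mono_left nhdsWithin_le_nhds
    refine le_of_tendsto_of_tendsto hleft hright ?_
    filter_upwards [self_mem_nhdsWithin] with ε hε
    exact jensen _ (hshift ε hε)

end Line

section SecondDerivative

variable {E : Type*} [NormedAddCommGroup E] [NormedSpace ℝ E] {F : E → ℝ} {p x v : E}

lemma fderiv_fderiv_nonneg_of_convexOn {s : Set E} (hconv : ConvexOn ℝ s F) (hs : s ∈ 𝓝 p)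
    (hF : ContDiffAt ℝ 2 F p) (v : E) : 0 ≤ fderiv ℝ (fderiv ℝ F) p v v := by
  have hp : p + (0 : ℝ) • v = p := by simp
  have hline : Tendsto (fun t : ℝ => p + t • v) (𝓝 0) (𝓝 p) := by
    simpa using (hasDerivAt_add_smul p v (0 : ℝ)).continuousAt.tendsto
  obtain ⟨r, hr, hball⟩ := Metric.eventually_nhds_iff_ball.1
    (hline.eventually ((show ∀ᶠ q in 𝓝 p, q ∈ s from hs).and (hF.eventually (by simp))))
  have hconv_line : ConvexOn ℝ (Metric.ball 0 r) fun t : ℝ => F (p + t • v) := by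
    have := hconv.comp_affineMap (AffineMap.lineMap p (p + v))
    simp only [Function.comp_def, AffineMap.lineMap_apply_module', add_sub_cancel_left,
      add_comm _ p] at this
    exact this.subset (fun t ht => by
      simpa [AffineMap.lineMap_apply_module', add_comm _ p] using (hball t ht).1)
      (convex_ball 0 r)
  have hmono := hconv_line.monotoneOn_deriv fun t ht =>
    (hasDerivAt_comp_add_smul ((hball t ht).2.differentiableAt two_ne_zero)).differentiableAt
  have hnonneg := hmono.derivWithin_nonneg (x := 0)
  rw [derivWithin_of_isOpen Metric.isOpen_ball (Metric.mem_ball_self hr),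
    (hasDerivAt_deriv_comp_add_smul (by rwa [hp])).deriv, hp] at hnonneg
  exact hnonneg

lemma convexOn_comp_add_smul (hF : ∀ t : ℝ, ContDiffAt ℝ 2 F (x + t • v))
    (hnonneg : ∀ t : ℝ, 0 ≤ fderiv ℝ (fderiv ℝ F) (x + t • v) v v) :
    ConvexOn ℝ univ fun t : ℝ => F (x + t • v) := by
  have hsnd := fun t => hasDerivAt_deriv_comp_add_smul (hF t)
  refine convexOn_univ_of_deriv2_nonneg
    (fun t => (hasDerivAt_comp_add_smul ((hF t).differentiableAt two_ne_zero)).differentiableAt)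
    (fun t => (hsnd t).differentiableAt) fun t => ?_
  simpa only [Function.iterate_succ, Function.iterate_zero, Function.comp_apply, id_eq,
    (hsnd t).deriv] using hnonneg t

end SecondDerivative

/-- Positive homogeneity of degree one, the scaling property of norms and anisotropies. Only
positive scalars are allowed, so `F` need not be even. -/
def IsPosHomogeneous {E : Type*} [AddCommGroup E] [Module ℝ E] (F : E → ℝ) : Prop :=
  ∀ c : ℝ, 0 < c → ∀ x, F (c • x) = c * F x

namespace IsPosHomogeneous

section Module

variable {E : Type*} [AddCommGroup E] [Module ℝ E] {F G : E → ℝ}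

lemma sub_const_mul (hF : IsPosHomogeneous F) (hG : IsPosHomogeneous G) (γ : ℝ) :
    IsPosHomogeneous fun x => F x - γ * G x :=
  fun c hc x => by simp only [hF c hc, hG c hc]; ring

lemma map_zero (hF : IsPosHomogeneous F) : F 0 = 0 := by
  have h := hF 2 two_pos 0
  rw [smul_zero] at h
  linarith

end Module

section NormedSpace

variable {E : Type*} [NormedAddCommGroup E] [NormedSpace ℝ E] {F : E → ℝ} {p : E} {c : ℝ}

lemma norm : IsPosHomogeneous fun x : E => ‖x‖ :=
  fun c hc x => by simp only [norm_smul, Real.norm_of_nonneg hc.le]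

lemma exists_abs_le_mul_norm [FiniteDimensional ℝ E] (hF : IsPosHomogeneous F)
    (hcont : ContinuousOn F {0}ᶜ) : ∃ C, ∀ x, |F x| ≤ C * ‖x‖ := by
  have hsphere : Metric.sphere (0 : E) 1 ⊆ {0}ᶜ :=
    fun _ hu => Metric.ne_of_mem_sphere hu one_ne_zero
  obtain ⟨C, hC⟩ := (isCompact_sphere (0 : E) 1).exists_bound_of_continuousOn (hcont.mono hsphere)
  refine ⟨C, fun x => ?_⟩
  rcases eq_or_ne x 0 with rfl | hx
  · simp [hF.map_zero]
  · have hx' : 0 < ‖x‖ := norm_pos_iff.2 hx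
    have hunit := hC (‖x‖⁻¹ • x) (by simp [norm_smul, hx'.ne'])
    rwa [hF _ (inv_pos.2 hx'), Real.norm_eq_abs, abs_mul, abs_of_pos (inv_pos.2 hx'),
      inv_mul_le_iff₀ hx', mul_comm] at hunit

lemma continuous [FiniteDimensional ℝ E] (hF : IsPosHomogeneous F)
    (hcont : ContinuousOn F {0}ᶜ) : Continuous F := by
  rw [continuous_iff_continuousAt]
  intro x
  rcases eq_or_ne x 0 with rfl | hx
  · obtain ⟨C, hC⟩ := hF.exists_abs_le_mul_norm hcont
    rw [ContinuousAt, hF.map_zero]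
    refine squeeze_zero_norm hC ?_
    simpa using (continuous_norm.tendsto (0 : E)).const_mul C
  · exact hcont.continuousAt (isOpen_compl_singleton.mem_nhds hx)

lemma fderiv_smul (hF : IsPosHomogeneous F) (hc : 0 < c) (p : E) :
    fderiv ℝ F (c • p) = fderiv ℝ F p := by
  have hcomp : (fun x => F (c • x)) = c • F := funext (hF c hc)
  have h := fderiv_comp_smul (𝕜 := ℝ) (f := F) (x := p) c
  rw [hcomp, fderiv_const_smul_field] at h
  exact (smul_right_injective _ hc.ne' h).symm

lemma fderiv_fderiv_smul (hF : IsPosHomogeneous F) (hc : 0 < c) (p : E) :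
    fderiv ℝ (fderiv ℝ F) (c • p) = c⁻¹ • fderiv ℝ (fderiv ℝ F) p := by
  have hcomp : (fun x => fderiv ℝ F (c • x)) = fderiv ℝ F := funext (hF.fderiv_smul hc)
  have h := fderiv_comp_smul (𝕜 := ℝ) (f := fderiv ℝ F) (x := p) c
  rw [hcomp] at h
  rw [h, inv_smul_smul₀ hc.ne']

lemma fderiv_fderiv_apply_self (hF : IsPosHomogeneous F)
    (hdiff : DifferentiableAt ℝ (fderiv ℝ F) p) : fderiv ℝ (fderiv ℝ F) p p = 0 := by
  have hray : HasDerivAt (fun s : ℝ => fderiv ℝ F (s • p)) (fderiv ℝ (fderiv ℝ F) p p) 1 := by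
    have hsmul : HasDerivAt (fun s : ℝ => s • p) p 1 := by
      simpa using hasDerivAt_add_smul 0 p 1
    exact HasFDerivAt.comp_hasDerivAt 1 (by simpa using hdiff.hasFDerivAt) hsmul
  have hconst : (fun s : ℝ => fderiv ℝ F (s • p)) =ᶠ[𝓝 1] fun _ => fderiv ℝ F p := by
    filter_upwards [lt_mem_nhds one_pos] with s hs
    exact hF.fderiv_smul hs p
  exact hray.unique ((hasDerivAt_const 1 _).congr_of_eventuallyEq hconst)

lemma fderiv_fderiv_smul_self_add (hF : IsPosHomogeneous F) (hC2 : ContDiffAt ℝ 2 F p) (a : ℝ)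
    (w : E) : fderiv ℝ (fderiv ℝ F) p (a • p + w) (a • p + w) = fderiv ℝ (fderiv ℝ F) p w w := by
  have hself := hF.fderiv_fderiv_apply_self (differentiableAt_fderiv_of_contDiffAt_two hC2)
  have hsymm : fderiv ℝ (fderiv ℝ F) p w p = fderiv ℝ (fderiv ℝ F) p p w :=
    hC2.isSymmSndFDerivAt (by simp) w p
  simp [hself, hsymm]

end NormedSpace

end IsPosHomogeneous

section Orthogonality

variable {𝕜 : Type*} [RCLike 𝕜] {E : Type*} [NormedAddCommGroup E] [InnerProductSpace 𝕜 E]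

lemma exists_eq_smul_add_inner_eq_zero (p v : E) :
    ∃ (a : 𝕜) (w : E), v = a • p + w ∧ inner 𝕜 p w = 0 := by
  obtain ⟨q, hq, w, hw, hv⟩ :=
    Submodule.exists_add_mem_mem_orthogonal (K := Submodule.span 𝕜 {p}) v
  obtain ⟨a, rfl⟩ := Submodule.mem_span_singleton.1 hq
  exact ⟨a, w, hv, Submodule.mem_orthogonal_singleton_iff_inner_right.1 hw⟩

lemma add_smul_ne_zero_of_inner_eq_zero {p w : E} (hp : p ≠ 0) (hpw : inner 𝕜 p w = 0) (t : 𝕜) :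
    p + t • w ≠ 0 := by
  intro h
  have hinner : inner 𝕜 p (p + t • w) = 0 := by rw [h, inner_zero_right]
  rw [inner_add_right, inner_smul_right, hpw, mul_zero, add_zero, inner_self_eq_zero] at hinner
  exact hp hinner

end Orthogonality

section InnerProductSpace

variable {E : Type*} [NormedAddCommGroup E] [InnerProductSpace ℝ E] {F : E → ℝ} {p w : E}

lemma hasFDerivAt_norm (hp : p ≠ 0) :
    HasFDerivAt (fun x : E => ‖x‖) (‖p‖⁻¹ • innerSL ℝ p) p := by
  have h := (hasStrictFDerivAt_norm_sq p).hasFDerivAt.sqrt (pow_ne_zero 2 (norm_ne_zero_iff.2 hp))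
  simp only [Real.sqrt_sq (norm_nonneg _)] at h
  convert! h using 1
  rw [← Nat.cast_smul_eq_nsmul ℝ, smul_smul]
  congr 1
  push_cast
  field_simp

lemma fderiv_fderiv_norm_of_inner_eq_zero (hp : p ≠ 0) (hpw : ⟪p, w⟫ = 0) :
    fderiv ℝ (fderiv ℝ fun x : E => ‖x‖) p w w = ‖w‖ ^ 2 / ‖p‖ := by
  have hfst : (fderiv ℝ fun x : E => ‖x‖) =ᶠ[𝓝 p] fun q => ‖q‖⁻¹ • innerSL ℝ q := by
    filter_upwards [isOpen_ne.mem_nhds hp] with q hq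
    exact (hasFDerivAt_norm hq).fderiv
  have hinv := (hasDerivAt_inv (norm_ne_zero_iff.2 hp)).comp_hasFDerivAt p (hasFDerivAt_norm hp)
  have hsnd := (hinv.smul (innerSL ℝ (E := E)).hasFDerivAt).congr_of_eventuallyEq hfst
  calc fderiv ℝ (fderiv ℝ fun x : E => ‖x‖) p w w
      = ‖p‖⁻¹ * ⟪w, w⟫ + -(‖p‖ ^ 2)⁻¹ * (‖p‖⁻¹ * ⟪p, w⟫) * ⟪p, w⟫ := by rw [hsnd.fderiv]; rfl
    _ = ‖w‖ ^ 2 / ‖p‖ := by rw [hpw, real_inner_self_eq_norm_sq]; ring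

namespace IsPosHomogeneous

lemma exists_orthogonal_fderiv_fderiv_eq (hF : IsPosHomogeneous F) (hC2 : ContDiffAt ℝ 2 F p)
    (v : E) : ∃ (a : ℝ) (w : E), v = a • p + w ∧ ⟪p, w⟫ = 0 ∧
      fderiv ℝ (fderiv ℝ F) p v v = fderiv ℝ (fderiv ℝ F) p w w := by
  obtain ⟨a, w, rfl, hw⟩ := exists_eq_smul_add_inner_eq_zero (𝕜 := ℝ) p v
  exact ⟨a, w, rfl, hw, hF.fderiv_fderiv_smul_self_add hC2 a w⟩

theorem convexOn_univ_iff [FiniteDimensional ℝ E] (hE : 1 < Module.rank ℝ E)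
    (hF : IsPosHomogeneous F) (hC2 : ContDiffOn ℝ 2 F {0}ᶜ) :
    ConvexOn ℝ univ F ↔
      ∀ p w : E, p ≠ 0 → ⟪p, w⟫ = 0 → 0 ≤ fderiv ℝ (fderiv ℝ F) p w w := by
  constructor
  · intro hconv p w hp _
    exact fderiv_fderiv_nonneg_of_convexOn hconv univ_mem
      (contDiffAt_of_contDiffOn_compl_zero hC2 hp) w
  · intro hnonneg
    refine convexOn_univ_of_forall_line_ne_zero hE (hF.continuous hC2.continuousOn)
      fun x v hline => ?_
    have hC2_line := fun t => contDiffAt_of_contDiffOn_compl_zero hC2 (hline t)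
    refine convexOn_comp_add_smul hC2_line fun t => ?_
    obtain ⟨_, w, _, hw, hsnd⟩ := hF.exists_orthogonal_fderiv_fderiv_eq (hC2_line t) v
    rw [hsnd]
    exact hnonneg _ w (hline t) hw

theorem convexOn_sub_const_mul_norm_iff [FiniteDimensional ℝ E] (hE : 1 < Module.rank ℝ E)
    (hF : IsPosHomogeneous F) (hC2 : ContDiffOn ℝ 2 F {0}ᶜ) (γ : ℝ) :
    ConvexOn ℝ univ (fun x => F x - γ * ‖x‖) ↔
      ∀ p w : E, p ≠ 0 → ⟪p, w⟫ = 0 → γ * (‖w‖ ^ 2 / ‖p‖) ≤ fderiv ℝ (fderiv ℝ F) p w w := by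
  have hC2_sub : ContDiffOn ℝ 2 (fun x => F x - γ * ‖x‖) {0}ᶜ :=
    hC2.sub (contDiffOn_const.mul (contDiffOn_id.norm ℝ fun _ hx => hx))
  rw [(hF.sub_const_mul norm γ).convexOn_univ_iff hE hC2_sub]
  refine forall₄_congr fun p w hp hpw => ?_
  rw [fderiv_fderiv_sub_const_mul (contDiffAt_of_contDiffOn_compl_zero hC2 hp)
    (contDiffAt_norm ℝ hp)]
  simp only [sub_apply, smul_apply, smul_eq_mul, fderiv_fderiv_norm_of_inner_eq_zero hp hpw,
    sub_nonneg]

lemma fderiv_fderiv_eq_div_mul (hF : IsPosHomogeneous F) (hp : p ≠ 0) (hw : w ≠ 0) :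
    fderiv ℝ (fderiv ℝ F) p w w = ‖w‖ ^ 2 / ‖p‖ *
      fderiv ℝ (fderiv ℝ F) (‖p‖⁻¹ • p) (‖w‖⁻¹ • w) (‖w‖⁻¹ • w) := by
  have hp' : 0 < ‖p‖ := norm_pos_iff.2 hp
  simp only [hF.fderiv_fderiv_smul (inv_pos.2 hp'), map_smul, smul_apply, smul_eq_mul]
  field_simp

end IsPosHomogeneous

lemma exists_pos_forall_le_fderiv_fderiv [FiniteDimensional ℝ E] (hC2 : ContDiffOn ℝ 2 F {0}ᶜ)
    (hpos : ∀ u e : E, ‖u‖ = 1 → ‖e‖ = 1 → ⟪u, e⟫ = 0 → 0 < fderiv ℝ (fderiv ℝ F) u e e) :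
    ∃ γ : ℝ, 0 < γ ∧ ∀ u e : E, ‖u‖ = 1 → ‖e‖ = 1 → ⟪u, e⟫ = 0 →
      γ ≤ fderiv ℝ (fderiv ℝ F) u e e := by
  let K : Set (E × E) := (Metric.sphere 0 1 ×ˢ Metric.sphere 0 1) ∩ {q | ⟪q.1, q.2⟫ = 0}
  have hmem (u e : E) : (u, e) ∈ K ↔ ‖u‖ = 1 ∧ ‖e‖ = 1 ∧ ⟪u, e⟫ = 0 := by
    simp [K, and_assoc]
  have hK : IsCompact K := ((isCompact_sphere _ _).prod (isCompact_sphere _ _)).inter_right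
    (isClosed_eq (continuous_fst.inner continuous_snd) continuous_const)
  have hcont : ContinuousOn (fun q : E × E => fderiv ℝ (fderiv ℝ F) q.1 q.2 q.2) K := by
    rintro ⟨u, e⟩ hue
    have hu : u ≠ 0 := norm_ne_zero_iff.1 (((hmem u e).1 hue).1.trans_ne one_ne_zero)
    have hsnd : ContinuousAt (fderiv ℝ (fderiv ℝ F)) u :=
      (((contDiffAt_of_contDiffOn_compl_zero hC2 hu).fderiv_right (m := 1)
        (by norm_num)).fderiv_right (m := 0) (by norm_num)).continuousAt
    have hsnd_fst : ContinuousAt (fun q : E × E => fderiv ℝ (fderiv ℝ F) q.1) (u, e) :=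
      hsnd.comp_of_eq continuousAt_fst rfl
    exact ((hsnd_fst.clm_apply continuousAt_snd).clm_apply continuousAt_snd).continuousWithinAt
  have hpos_K : ∀ q ∈ K, 0 < fderiv ℝ (fderiv ℝ F) q.1 q.2 q.2 := by
    rintro ⟨u, e⟩ hue
    obtain ⟨hu, he, horth⟩ := (hmem u e).1 hue
    exact hpos u e hu he horth
  obtain ⟨γ, hγ, hle⟩ := hK.exists_forall_le' hcont hpos_K
  exact ⟨γ, hγ, fun u e hu he hue => hle (u, e) ((hmem u e).2 ⟨hu, he, hue⟩)⟩

namespace IsPosHomogeneous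

theorem exists_convexOn_sub_const_mul_norm_iff [FiniteDimensional ℝ E] (hE : 1 < Module.rank ℝ E)
    (hF : IsPosHomogeneous F) (hC2 : ContDiffOn ℝ 2 F {0}ᶜ) :
    (∃ γ : ℝ, 0 < γ ∧ ConvexOn ℝ univ fun x => F x - γ * ‖x‖) ↔
      ∀ p w : E, p ≠ 0 → w ≠ 0 → ⟪p, w⟫ = 0 → 0 < fderiv ℝ (fderiv ℝ F) p w w := by
  simp only [hF.convexOn_sub_const_mul_norm_iff hE hC2]
  constructor
  · rintro ⟨γ, hγ, hbound⟩ p w hp hw hpw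
    have : 0 < γ * (‖w‖ ^ 2 / ‖p‖) := by positivity
    exact this.trans_le (hbound p w hp hpw)
  · intro hpos
    obtain ⟨γ, hγ, hbound⟩ := exists_pos_forall_le_fderiv_fderiv hC2 fun u e hu he hue =>
      hpos u e (norm_ne_zero_iff.1 (hu.trans_ne one_ne_zero))
        (norm_ne_zero_iff.1 (he.trans_ne one_ne_zero)) hue
    refine ⟨γ, hγ, fun p w hp hpw => ?_⟩
    rcases eq_or_ne w 0 with rfl | hw
    · simp
    · rw [hF.fderiv_fderiv_eq_div_mul hp hw, mul_comm]
      gcongr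
      refine hbound _ _ ?_ ?_ ?_
      · exact norm_smul_inv_norm hp
      · exact norm_smul_inv_norm hw
      · rw [inner_smul_left, inner_smul_right, hpw, mul_zero, mul_zero]

theorem forall_segment_deriv_deriv_pos_iff (hF : IsPosHomogeneous F) (hC2 : ContDiffOn ℝ 2 F {0}ᶜ) :
    (∀ x y : E, x ≠ y → (∀ t : ℝ, x + t • (y - x) ≠ 0) → ∀ t ∈ Icc (0 : ℝ) 1,
      DifferentiableAt ℝ (fun s : ℝ => F (x + s • (y - x))) t ∧
      DifferentiableAt ℝ (deriv fun s : ℝ => F (x + s • (y - x))) t ∧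
      0 < deriv (deriv fun s : ℝ => F (x + s • (y - x))) t) ↔
      ∀ p w : E, p ≠ 0 → w ≠ 0 → ⟪p, w⟫ = 0 → 0 < fderiv ℝ (fderiv ℝ F) p w w := by
  constructor
  · intro hsegment p w hp hw hpw
    have hline := add_smul_ne_zero_of_inner_eq_zero hp hpw
    have hpos := (hsegment p (p + w) (by simpa using hw) (by simpa using hline) 0 (by simp)).2.2
    rw [add_sub_cancel_left, (hasDerivAt_deriv_comp_add_smul
      (contDiffAt_of_contDiffOn_compl_zero hC2 (hline 0))).deriv] at hpos
    simpa using hpos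
  · intro hpos x y hxy hline t _
    have hC2_at := contDiffAt_of_contDiffOn_compl_zero hC2 (hline t)
    have hsnd := hasDerivAt_deriv_comp_add_smul hC2_at
    refine ⟨(hasDerivAt_comp_add_smul (hC2_at.differentiableAt two_ne_zero)).differentiableAt,
      hsnd.differentiableAt, ?_⟩
    obtain ⟨a, w, hv, hw, hsnd_eq⟩ := hF.exists_orthogonal_fderiv_fderiv_eq hC2_at (y - x)
    have hw0 : w ≠ 0 := by
      rintro rfl
      rw [add_zero] at hv
      exact ne_smul_of_forall_add_smul_ne_zero (sub_ne_zero.2 hxy.symm) hline t a hv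
    rw [hsnd.deriv, hsnd_eq]
    exact hpos _ w (hline t) hw0 hw

end IsPosHomogeneous

theorem elliptic_iff_strictly_convex_on_segments_general [FiniteDimensional ℝ E]
    (hE : 1 < Module.rank ℝ E) (hF : IsPosHomogeneous F) (hC2 : ContDiffOn ℝ 2 F {0}ᶜ) :
    (∃ γ : ℝ, 0 < γ ∧ ConvexOn ℝ univ fun x => F x - γ * ‖x‖) ↔
      ∀ x y : E, x ≠ y → (∀ t : ℝ, x + t • (y - x) ≠ 0) → ∀ t ∈ Icc (0 : ℝ) 1,
        DifferentiableAt ℝ (fun s : ℝ => F (x + s • (y - x))) t ∧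
        DifferentiableAt ℝ (deriv fun s : ℝ => F (x + s • (y - x))) t ∧
        0 < deriv (deriv fun s : ℝ => F (x + s • (y - x))) t :=
  (hF.exists_convexOn_sub_const_mul_norm_iff hE hC2).trans
    (hF.forall_segment_deriv_deriv_pos_iff hC2).symm

end InnerProductSpace

/-- Proposition A.2, (a) ⇔ (e): a `C²`-anisotropy is elliptic iff along every segment on
a line avoiding the origin, `t ↦ Φ(x + t(y−x))` is twice differentiable with strictly
positive second derivative on `[0,1]`. -/
theorem elliptic_iff_strictly_convex_on_segments
    (n : ℕ) (hn : 2 ≤ n) (Φ : EuclideanSpace ℝ (Fin n) → ℝ)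
    (hΦ : IsCAnisotropy 2 Φ) :
    IsElliptic Φ ↔
      ∀ x y : EuclideanSpace ℝ (Fin n), x ≠ y →
        (∀ t : ℝ, x + t • (y - x) ≠ 0) →
        ∀ t ∈ Set.Icc (0 : ℝ) 1,
          DifferentiableAt ℝ (fun s : ℝ => Φ (x + s • (y - x))) t ∧
          DifferentiableAt ℝ (deriv fun s : ℝ => Φ (x + s • (y - x))) t ∧
          0 < deriv (deriv fun s : ℝ => Φ (x + s • (y - x))) t := by
  have hrank : 1 < Module.rank ℝ (EuclideanSpace ℝ (Fin n)) := by
    simpa [← Module.finrank_eq_rank] using show 1 < n from hn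
  exact elliptic_iff_strictly_convex_on_segments_general hrank hΦ.1.2.2.1 hΦ.2
end

section
/- Let n ≥ 2, let Γ ⊆ ℝⁿ be a nonempty compact set, let V ⊇ Γ be open, and let f : V → ℝ be twice continuously differentiable with Γ = f⁻¹({0}) and ∇f(x) ≠ 0 for every x ∈ Γ. Then there exists r > 0 such that the open tube U_r := {y ∈ ℝⁿ : dist(y, Γ) < r} is contained in V, and the signed distance function sd, defined on U_r by sd(y) := dist(y, Γ) if f(y) ≥ 0 and sd(y) := −dist(y, Γ) if f(y) < 0, is twice continuously differentiable on U_r; moreover ∇sd(x) = ∇f(x)/|∇f(x)| for every x ∈ Γ. (Regularity of the signed distance to a regular level set; Euclidean case of Proposition 2.1 (a)–(c).) -/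
open Filter Metric Topology
open scoped ContDiff Gradient

/-!
Let `ν = ∇f / |∇f|` near `Γ`. The map `(q, s) ↦ (q + s ν(q), f q)` is a local diffeomorphism at
`(x₀, 0)` for `x₀ ∈ Γ`, so every `y` near `x₀` is `P y + t y • ν (P y)` for a unique foot point
`P y ∈ Γ` near `x₀` and a unique small height `t y`. By the Lagrange multiplier rule, a point of
`Γ` nearest to `y` is joined to `y` by a multiple of the normal, hence it is `P y` and
`dist(y, Γ) = |t y|`. As `f` increases along `ν`, the signed distance is `t`.

A priori `t` is only as regular as `ν`, one derivative short. Differentiating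
`y = P y + t y • ν (P y)` and pairing with `ν (P y)`, which is orthogonal to `DP` (because
`f ∘ P = 0`) and to `D(ν ∘ P)` (because `|ν| = 1`), gives `∇t = ν ∘ P`, which restores it.
-/

section CollarChart

variable {𝕜 E : Type*} [NontriviallyNormedField 𝕜] [NormedAddCommGroup E] [NormedSpace 𝕜 E]

/-- The linear automorphism `(v, s) ↦ (v + s • u, ℓ v)` of `E × 𝕜` given by a vector `u`
transversal to the kernel of `ℓ`; it is the derivative of `(q, s) ↦ (q + s • ν q, f q)` at a point
with `s = 0`, for `ℓ = Df` and `u = ν`. -/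
noncomputable def transversalEquiv (ℓ : StrongDual 𝕜 E) (u : E) (hu : ℓ u ≠ 0) :
    (E × 𝕜) ≃L[𝕜] E × 𝕜 :=
  let height : E × 𝕜 →L[𝕜] 𝕜 :=
    (ℓ u)⁻¹ • (ℓ.comp (.fst 𝕜 E 𝕜) - .snd 𝕜 E 𝕜)
  .equivOfInverse
    ((.fst 𝕜 E 𝕜 + (ContinuousLinearMap.snd 𝕜 E 𝕜).smulRight u).prod (ℓ.comp (.fst 𝕜 E 𝕜)))
    ((.fst 𝕜 E 𝕜 - height.smulRight u).prod height)
    (fun z => by simp [height, mul_comm _ (ℓ u), hu])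
    (fun z => by simp [height, mul_comm _ (ℓ u), hu])

@[simp]
lemma transversalEquiv_apply (ℓ : StrongDual 𝕜 E) (u : E) (hu : ℓ u ≠ 0) (z : E × 𝕜) :
    transversalEquiv ℓ u hu z = (z.1 + z.2 • u, ℓ z.1) :=
  rfl

lemma hasFDerivAt_add_smul_prodMk {f : E → 𝕜} {ν : E → E} {x₀ : E}
    (hf : DifferentiableAt 𝕜 f x₀) (hν : DifferentiableAt 𝕜 ν x₀)
    (htrans : fderiv 𝕜 f x₀ (ν x₀) ≠ 0) :
    HasFDerivAt (fun z : E × 𝕜 => (z.1 + z.2 • ν z.1, f z.1))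
      (transversalEquiv (fderiv 𝕜 f x₀) (ν x₀) htrans : E × 𝕜 →L[𝕜] E × 𝕜) (x₀, 0) := by
  have hfst : HasFDerivAt Prod.fst (ContinuousLinearMap.fst 𝕜 E 𝕜) (x₀, (0 : 𝕜)) :=
    hasFDerivAt_fst
  have hsnd : HasFDerivAt Prod.snd (ContinuousLinearMap.snd 𝕜 E 𝕜) (x₀, (0 : 𝕜)) :=
    hasFDerivAt_snd
  have hν' := hν.hasFDerivAt.comp (x₀, (0 : 𝕜)) hfst
  have hf' := hf.hasFDerivAt.comp (x₀, (0 : 𝕜)) hfst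
  refine ((hfst.add (hsnd.smul hν')).prodMk hf').congr_fderiv ?_
  ext z <;> simp

/-- `P` and `t` are the foot point and the height of collar coordinates around `x₀` for the level
set `{f = 0}` and the transversal field `ν`: near `x₀`, every `y` is `P y + t y • ν (P y)` with
`f (P y) = 0`, and this decomposition is unique among those with foot point near `x₀` and small
height. Points outside a neighbourhood of `x₀` are unconstrained. -/
structure IsCollarChart (k : ℕ∞ω) (f : E → 𝕜) (ν : E → E) (x₀ : E) (P : E → E) (t : E → 𝕜) :
    Prop where
  contDiffAt_foot : ContDiffAt 𝕜 k P x₀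
  contDiffAt_height : ContDiffAt 𝕜 k t x₀
  foot_self : P x₀ = x₀
  height_self : t x₀ = 0
  eventually_foot_add_smul : ∀ᶠ y in 𝓝 x₀, P y + t y • ν (P y) = y
  eventually_apply_foot : ∀ᶠ y in 𝓝 x₀, f (P y) = 0
  eventually_unique : ∀ᶠ z : E × 𝕜 in 𝓝 (x₀, 0), f z.1 = 0 →
    P (z.1 + z.2 • ν z.1) = z.1 ∧ t (z.1 + z.2 • ν z.1) = z.2

namespace IsCollarChart

variable {k : ℕ∞ω} {f : E → 𝕜} {ν : E → E} {x₀ : E} {P : E → E} {t : E → 𝕜}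

lemma tendsto_foot (h : IsCollarChart k f ν x₀ P t) : Tendsto P (𝓝 x₀) (𝓝 x₀) := by
  simpa only [h.foot_self] using h.contDiffAt_foot.continuousAt.tendsto

lemma tendsto_height (h : IsCollarChart k f ν x₀ P t) : Tendsto t (𝓝 x₀) (𝓝 0) := by
  simpa only [h.height_self] using h.contDiffAt_height.continuousAt.tendsto

end IsCollarChart

theorem exists_isCollarChart {𝕜 E : Type*} [RCLike 𝕜] [NormedAddCommGroup E] [NormedSpace 𝕜 E]
    [CompleteSpace E] {k : ℕ∞ω} (hk : k ≠ 0) {f : E → 𝕜} {ν : E → E}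
    {x₀ : E} (hf : ContDiffAt 𝕜 k f x₀) (hν : ContDiffAt 𝕜 k ν x₀) (hf₀ : f x₀ = 0)
    (htrans : fderiv 𝕜 f x₀ (ν x₀) ≠ 0) :
    ∃ P t, IsCollarChart k f ν x₀ P t := by
  let Φ : E × 𝕜 → E × 𝕜 := fun z => (z.1 + z.2 • ν z.1, f z.1)
  have hΦ₀ : Φ (x₀, 0) = (x₀, 0) := by simp [Φ, hf₀]
  have hΦ : ContDiffAt 𝕜 k Φ (x₀, 0) :=
    (contDiffAt_fst.add (contDiffAt_snd.smul (hν.comp (x₀, (0 : 𝕜)) contDiffAt_fst))).prodMk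
      (hf.comp (x₀, (0 : 𝕜)) contDiffAt_fst)
  have hΦ' := hasFDerivAt_add_smul_prodMk (hf.differentiableAt hk) (hν.differentiableAt hk) htrans
  have hstrict := hΦ.hasStrictFDerivAt' hΦ' hk
  let Ψ : E × 𝕜 → E × 𝕜 := hΦ.localInverse hΦ' hk
  have hΨ₀ : Ψ (x₀, 0) = (x₀, 0) := by
    simpa only [hΦ₀] using hΦ.localInverse_apply_image hΦ' hk
  have hleft : ∀ᶠ z in 𝓝 (x₀, (0 : 𝕜)), Ψ (Φ z) = z := hstrict.eventually_left_inverse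
  have hright : ∀ᶠ z in 𝓝 (x₀, (0 : 𝕜)), Φ (Ψ z) = z := by
    have hright₀ := hstrict.eventually_right_inverse
    rwa [hΦ₀] at hright₀
  have hslice : ContDiffAt 𝕜 k (fun y => Ψ (y, 0)) x₀ := by
    have hΨ : ContDiffAt 𝕜 k Ψ (x₀, 0) := by simpa only [hΦ₀] using hΦ.to_localInverse hΦ' hk
    exact hΨ.comp x₀ (contDiffAt_id.prodMk contDiffAt_const)
  have hright_slice : ∀ᶠ y in 𝓝 x₀, Φ (Ψ (y, 0)) = (y, 0) :=
    ((Continuous.prodMk_left (0 : 𝕜)).tendsto x₀).eventually hright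
  refine ⟨fun y => (Ψ (y, 0)).1, fun y => (Ψ (y, 0)).2, hslice.fst, hslice.snd, by simp only [hΨ₀],
    by simp only [hΨ₀], hright_slice.mono fun y hy => congrArg Prod.fst hy,
    hright_slice.mono fun y hy => congrArg Prod.snd hy, ?_⟩
  filter_upwards [hleft] with z hz hfz
  have hΦz : Φ z = (z.1 + z.2 • ν z.1, 0) := by simp only [Φ, hfz]
  simp only [← hΦz, hz, and_self]

end CollarChart

lemma eventually_apply_le_apply_add_smul_iff {E : Type*} [NormedAddCommGroup E] [NormedSpace ℝ E]
    {f : E → ℝ} {f' : StrongDual ℝ E} {x₀ u : E} (hf : HasStrictFDerivAt f f' x₀)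
    (hu : 0 < f' u) :
    ∀ᶠ p : E × E × ℝ in 𝓝 (x₀, u, 0), f p.1 ≤ f (p.1 + p.2.2 • p.2.1) ↔ 0 ≤ p.2.2 := by
  obtain ⟨c, hc, hcu⟩ := exists_pos_mul_lt hu ‖u‖
  have hslope : ∀ᶠ p : E × E × ℝ in 𝓝 (x₀, u, 0), ‖p.2.1‖ * c < f' p.2.1 :=
    ContinuousAt.eventually_lt (by fun_prop) (by fun_prop) hcu
  have htendsto : Tendsto (fun p : E × E × ℝ => (p.1 + p.2.2 • p.2.1, p.1)) (𝓝 (x₀, u, 0))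
      (𝓝 (x₀, x₀)) := by
    have hcont : Continuous fun p : E × E × ℝ => (p.1 + p.2.2 • p.2.1, p.1) := by fun_prop
    simpa using hcont.tendsto (x₀, u, 0)
  filter_upwards [hslope, htendsto.eventually (hf.isLittleO.bound hc)] with ⟨q, v, s⟩ hv hbound
  simp only [add_sub_cancel_left, map_smul, smul_eq_mul, norm_smul, Real.norm_eq_abs, abs_le]
    at hv hbound ⊢
  constructor
  · intro hle
    by_contra! hs
    rw [abs_of_neg hs] at hbound
    nlinarith [mul_lt_mul_of_neg_left hv hs]
  · intro hs
    rw [abs_of_nonneg hs] at hbound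
    nlinarith [mul_le_mul_of_nonneg_left hv.le hs]

section UnitNormal

variable {E : Type*} [NormedAddCommGroup E] [InnerProductSpace ℝ E]

lemma inner_fderiv_eq_zero_of_norm_eq_const {F : Type*} [NormedAddCommGroup F] [NormedSpace ℝ F]
    {N : F → E} {N' : F →L[ℝ] E} {y : F} {c : ℝ} (hN : HasFDerivAt N N' y)
    (hnorm : ∀ᶠ z in 𝓝 y, ‖N z‖ = c) (v : F) : inner ℝ (N y) (N' v) = 0 := by
  have hconst : (fun z => ‖N z‖ ^ 2) =ᶠ[𝓝 y] fun _ => c ^ 2 :=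
    hnorm.mono fun z hz => by simp only [hz]
  have hzero := hN.norm_sq.unique ((hasFDerivAt_const (c ^ 2) y).congr_of_eventuallyEq hconst)
  simpa using DFunLike.congr_fun hzero v

variable [CompleteSpace E]

lemma hasGradientAt_of_orthogonal_decomposition {P N : E → E} {P' : E →L[ℝ] E} {t : E → ℝ} {y : E}
    (hP : HasFDerivAt P P' y) (hN : DifferentiableAt ℝ N y) (ht : DifferentiableAt ℝ t y)
    (hdecomp : ∀ᶠ z in 𝓝 y, P z + t z • N z = z) (hnorm : ∀ᶠ z in 𝓝 y, ‖N z‖ = 1)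
    (horth : ∀ v, inner ℝ (N y) (P' v) = 0) :
    HasGradientAt t (N y) y := by
  rw [hasGradientAt_iff_hasFDerivAt]
  refine ht.hasFDerivAt.congr_fderiv (ContinuousLinearMap.ext fun v => ?_)
  have hderiv : P' + (t y • fderiv ℝ N y + (fderiv ℝ t y).smulRight (N y)) = .id ℝ E :=
    (hP.add (ht.hasFDerivAt.smul hN.hasFDerivAt)).unique
      ((hasFDerivAt_id y).congr_of_eventuallyEq hdecomp)
  calc fderiv ℝ t y v
      = inner ℝ (N y) ((P' + (t y • fderiv ℝ N y + (fderiv ℝ t y).smulRight (N y))) v) := by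
        simp [inner_add_right, inner_smul_right, horth, hnorm.self_of_nhds,
          inner_fderiv_eq_zero_of_norm_eq_const hN.hasFDerivAt hnorm]
    _ = inner ℝ (N y) v := by rw [hderiv, ContinuousLinearMap.id_apply]

lemma contDiffAt_gradient {f : E → ℝ} {x : E} {k : ℕ∞ω} (hf : ContDiffAt ℝ (k + 1) f x) :
    ContDiffAt ℝ k (∇ f) x :=
  (InnerProductSpace.toDual ℝ E).symm.contDiff.contDiffAt.comp x (hf.fderiv_right le_rfl)

/-- The unit normal `∇f / |∇f|` to the level sets of `f`, pointing in the direction of increasing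
`f`; it is `0` where the gradient vanishes. -/
noncomputable def unitNormal (f : E → ℝ) (x : E) : E :=
  ‖∇ f x‖⁻¹ • ∇ f x

lemma norm_unitNormal {f : E → ℝ} {x : E} (hg : ∇ f x ≠ 0) : ‖unitNormal f x‖ = 1 :=
  norm_smul_inv_norm hg

lemma inner_unitNormal_left (f : E → ℝ) (x v : E) :
    inner ℝ (unitNormal f x) v = ‖∇ f x‖⁻¹ * fderiv ℝ f x v := by
  rw [unitNormal, real_inner_smul_left, inner_gradient_left]

lemma fderiv_unitNormal_pos {f : E → ℝ} {x : E} (hg : ∇ f x ≠ 0) :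
    0 < fderiv ℝ f x (unitNormal f x) := by
  rw [← inner_gradient_left, unitNormal, real_inner_smul_right]
  exact mul_pos (inv_pos.2 (norm_pos_iff.2 hg)) (real_inner_self_pos.2 hg)

lemma contDiffAt_unitNormal {f : E → ℝ} {x : E} {k : ℕ∞ω} (hf : ContDiffAt ℝ (k + 1) f x)
    (hg : ∇ f x ≠ 0) : ContDiffAt ℝ k (unitNormal f) x :=
  (((contDiffAt_gradient hf).norm ℝ hg).inv (norm_ne_zero_iff.2 hg)).smul (contDiffAt_gradient hf)

lemma continuousAt_gradient {f : E → ℝ} {x : E} (hf : ContDiffAt ℝ 1 f x) :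
    ContinuousAt (∇ f) x :=
  (contDiffAt_gradient (k := 0) (by simpa only [zero_add] using hf)).continuousAt

lemma continuousAt_unitNormal {f : E → ℝ} {x : E} (hf : ContDiffAt ℝ 1 f x) (hg : ∇ f x ≠ 0) :
    ContinuousAt (unitNormal f) x :=
  ((continuousAt_gradient hf).norm.inv₀ (norm_ne_zero_iff.2 hg)).smul (continuousAt_gradient hf)

namespace IsCollarChart

variable {f : E → ℝ} {x₀ : E} {P : E → E} {t : E → ℝ}

theorem eventually_hasGradientAt_height {k : ℕ} (h : IsCollarChart k f (unitNormal f) x₀ P t)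
    (hk : k ≠ 0) (hf : ContDiffAt ℝ (k + 1) f x₀) (hg : ∇ f x₀ ≠ 0) :
    ∀ᶠ y in 𝓝 x₀, HasGradientAt t (unitNormal f (P y)) y := by
  have hk' : (k : ℕ∞ω) ≠ 0 := mod_cast hk
  have hregular : ∀ᶠ q in 𝓝 x₀,
      DifferentiableAt ℝ f q ∧ DifferentiableAt ℝ (unitNormal f) q ∧ ∇ f q ≠ 0 := by
    filter_upwards [hf.eventually (by simp), (contDiffAt_unitNormal hf hg).eventually (by simp),
      (contDiffAt_gradient hf).continuousAt.eventually_ne hg] with q hfq hνq hgq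
    exact ⟨hfq.differentiableAt (by simp), hνq.differentiableAt hk', hgq⟩
  filter_upwards [h.tendsto_foot.eventually hregular,
    (h.tendsto_foot.eventually hregular).eventually_nhds,
    h.eventually_foot_add_smul.eventually_nhds, h.eventually_apply_foot.eventually_nhds,
    h.contDiffAt_foot.eventually (by simp), h.contDiffAt_height.eventually (by simp)]
    with y ⟨hfPy, hνPy, _⟩ hreg hdecomp hzero hP ht
  have hPy : HasFDerivAt P (fderiv ℝ P y) y := (hP.differentiableAt hk').hasFDerivAt
  have htangent : (fderiv ℝ f (P y)).comp (fderiv ℝ P y) = 0 :=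
    (hfPy.hasFDerivAt.comp y hPy).unique ((hasFDerivAt_const 0 y).congr_of_eventuallyEq hzero)
  refine hasGradientAt_of_orthogonal_decomposition hPy (hνPy.comp y hPy.differentiableAt)
    (ht.differentiableAt hk') hdecomp (hreg.mono fun z hz => norm_unitNormal hz.2.2) fun v => ?_
  rw [Function.comp_apply, inner_unitNormal_left, ← ContinuousLinearMap.comp_apply, htangent,
    zero_apply, mul_zero]

theorem contDiffAt_height_succ {k : ℕ} (h : IsCollarChart k f (unitNormal f) x₀ P t)
    (hk : k ≠ 0) (hf : ContDiffAt ℝ (k + 1) f x₀) (hg : ∇ f x₀ ≠ 0) :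
    ContDiffAt ℝ (k + 1) t x₀ := by
  have hν : ContDiffAt ℝ k (unitNormal f) (P x₀) := by
    simpa only [h.foot_self] using contDiffAt_unitNormal hf hg
  exact contDiffAt_succ_iff_hasFDerivAt.2
    ⟨fun y => InnerProductSpace.toDual ℝ E (unitNormal f (P y)),
    ⟨_, h.eventually_hasGradientAt_height hk hf hg, fun y hy => hy.hasFDerivAt⟩,
    (InnerProductSpace.toDual ℝ E).contDiff.contDiffAt.comp x₀ (hν.comp x₀ h.contDiffAt_foot)⟩

theorem eventually_nonneg_iff_height_nonneg {k : ℕ∞ω}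
    (h : IsCollarChart k f (unitNormal f) x₀ P t)
    (hf : ContDiffAt ℝ 1 f x₀) (hg : ∇ f x₀ ≠ 0) :
    ∀ᶠ y in 𝓝 x₀, 0 ≤ f y ↔ 0 ≤ t y := by
  have hchart : Tendsto (fun y => (P y, unitNormal f (P y), t y)) (𝓝 x₀)
      (𝓝 (x₀, unitNormal f x₀, 0)) :=
    h.tendsto_foot.prodMk_nhds
      (((continuousAt_unitNormal hf hg).tendsto.comp h.tendsto_foot).prodMk_nhds h.tendsto_height)
  have hsign := hchart.eventually (eventually_apply_le_apply_add_smul_iff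
    (hf.hasStrictFDerivAt one_ne_zero) (fderiv_unitNormal_pos hg))
  filter_upwards [hsign, h.eventually_foot_add_smul, h.eventually_apply_foot] with y hy hPy hfPy
  simpa only [hPy, hfPy] using hy

end IsCollarChart

end UnitNormal

section NearestPoint

lemma eventually_forall_nearest {α : Type*} [PseudoMetricSpace α] {Γ : Set α} {x₀ : α}
    (hx₀ : x₀ ∈ Γ) {p : α × ℝ → Prop} (hp : ∀ᶠ z in 𝓝 (x₀, 0), p z) :
    ∀ᶠ y in 𝓝 x₀, ∀ q s, infDist y Γ = dist y q → |s| = dist y q → p (q, s) := by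
  obtain ⟨ε, hε, hball⟩ := Metric.eventually_nhds_iff.1 hp
  filter_upwards [ball_mem_nhds x₀ (half_pos hε)] with y hy q s hq hs
  rw [mem_ball] at hy
  have hle : dist y q ≤ dist y x₀ := hq ▸ infDist_le_dist_of_mem hx₀
  have htri : dist q x₀ ≤ dist y q + dist y x₀ := dist_triangle_left q x₀ y
  refine hball ?_
  rw [Prod.dist_eq, Real.dist_0_eq_abs, max_lt_iff]
  constructor <;> linarith

variable {E : Type*} [NormedAddCommGroup E] [InnerProductSpace ℝ E] [CompleteSpace E]

lemma exists_eq_add_smul_of_eventually_dist_le {f : E → ℝ} {y q g : E}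
    (hf : HasStrictFDerivAt f (innerSL ℝ g) q) (hg : g ≠ 0)
    (hmin : ∀ᶠ x in 𝓝 q, f x = f q → dist y q ≤ dist y x) :
    ∃ s : ℝ, y = q + s • g := by
  have hφ : HasStrictFDerivAt (fun x => ‖x - y‖ ^ 2) (2 • innerSL ℝ (q - y)) q := by
    simpa using (hasStrictFDerivAt_norm_sq (q - y)).comp q ((hasStrictFDerivAt_id q).sub_const y)
  have hextr : IsLocalExtrOn (fun x => ‖x - y‖ ^ 2) {x | f x = f q} q := by
    refine .inl (eventually_nhdsWithin_iff.2 (hmin.mono fun x hx hfx => ?_))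
    have hdist := hx hfx
    rw [dist_eq_norm', dist_eq_norm'] at hdist
    exact pow_le_pow_left₀ (norm_nonneg _) hdist 2
  obtain ⟨a, b, hab, hmult⟩ := hextr.exists_multipliers_of_hasStrictFDerivAt_1d hf hφ
  have hvec : a • g + (2 * b) • (q - y) = 0 := ext_inner_right ℝ fun v => by
    simpa [inner_add_left, inner_sub_left, real_inner_smul_left, mul_assoc, mul_left_comm]
      using DFunLike.congr_fun hmult v
  have hb : b ≠ 0 := by
    rintro rfl
    have hag : a • g = 0 := by simpa only [mul_zero, zero_smul, add_zero] using hvec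
    exact hab (by rw [(smul_eq_zero.1 hag).resolve_right hg, Prod.mk_zero_zero])
  refine ⟨a / (2 * b), ?_⟩
  linear_combination (norm := (match_scalars <;> field_simp <;> ring)) (-(2 * b)⁻¹ : ℝ) • hvec

lemma exists_eq_add_smul_unitNormal_of_eventually_dist_le {f : E → ℝ} {y q : E}
    (hf : ContDiffAt ℝ 1 f q) (hg : ∇ f q ≠ 0)
    (hmin : ∀ᶠ x in 𝓝 q, f x = f q → dist y q ≤ dist y x) :
    ∃ s : ℝ, y = q + s • unitNormal f q := by
  have hstrict : HasStrictFDerivAt f (innerSL ℝ (∇ f q)) q :=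
    (hf.hasStrictFDerivAt one_ne_zero).congr_fderiv
      (ContinuousLinearMap.ext fun v => inner_gradient_left.symm)
  obtain ⟨s, hs⟩ := exists_eq_add_smul_of_eventually_dist_le hstrict hg hmin
  exact ⟨s * ‖∇ f q‖, by
    rwa [unitNormal, smul_smul, mul_assoc, mul_inv_cancel₀ (norm_ne_zero_iff.2 hg), mul_one]⟩

end NearestPoint

section SignedDistance

/-- The distance to `Γ`, counted negatively where `f < 0`: the signed distance to `Γ` when `Γ` is
the zero set of `f`. -/
noncomputable def signedInfDist {α : Type*} [PseudoMetricSpace α] (f : α → ℝ) (Γ : Set α) (y : α) :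
    ℝ :=
  if 0 ≤ f y then infDist y Γ else -infDist y Γ

variable {E : Type*} [NormedAddCommGroup E] [InnerProductSpace ℝ E] [FiniteDimensional ℝ E]
  {f : E → ℝ} {Γ : Set E} {x₀ : E}

namespace IsCollarChart

variable {k : ℕ∞ω} {P : E → E} {t : E → ℝ}

theorem eventually_infDist_eq_abs_height (h : IsCollarChart k f (unitNormal f) x₀ P t)
    (hΓ : IsClosed Γ) (hΓf : ∀ᶠ x in 𝓝 x₀, x ∈ Γ ↔ f x = 0) (hf : ContDiffAt ℝ 1 f x₀)
    (hf₀ : f x₀ = 0) (hg : ∇ f x₀ ≠ 0) :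
    ∀ᶠ y in 𝓝 x₀, infDist y Γ = |t y| := by
  have hx₀ : x₀ ∈ Γ := hΓf.self_of_nhds.2 hf₀
  have hregular : ∀ᶠ q in 𝓝 x₀,
      ContDiffAt ℝ 1 f q ∧ ∇ f q ≠ 0 ∧ ∀ᶠ x in 𝓝 q, x ∈ Γ ↔ f x = 0 :=
    (hf.eventually (by simp)).and
      (((continuousAt_gradient hf).eventually_ne hg).and hΓf.eventually_nhds)
  filter_upwards [eventually_forall_nearest hx₀
    ((hregular.prod_inl_nhds 0).and h.eventually_unique)] with y hy
  obtain ⟨q, hqΓ, hq⟩ := hΓ.exists_infDist_eq_dist ⟨x₀, hx₀⟩ y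
  obtain ⟨hfq, hgq, hΓq⟩ := (hy q (dist y q) hq (abs_of_nonneg dist_nonneg)).1
  have hfq₀ : f q = 0 := hΓq.self_of_nhds.1 hqΓ
  have hmin : ∀ᶠ x in 𝓝 q, f x = f q → dist y q ≤ dist y x :=
    hΓq.mono fun x hx hfx => hq ▸ infDist_le_dist_of_mem (hx.2 (hfx.trans hfq₀))
  obtain ⟨s, hs⟩ := exists_eq_add_smul_unitNormal_of_eventually_dist_le hfq hgq hmin
  have hdist : |s| = dist y q := by
    rw [hs, dist_self_add_left, norm_smul, norm_unitNormal hgq, mul_one, Real.norm_eq_abs]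
  have hheight : t y = s := by
    simpa only [← hs] using ((hy q s hq hdist).2 hfq₀).2
  rw [hq, hheight, hdist]

theorem signedInfDist_eventuallyEq_height (h : IsCollarChart k f (unitNormal f) x₀ P t)
    (hΓ : IsClosed Γ) (hΓf : ∀ᶠ x in 𝓝 x₀, x ∈ Γ ↔ f x = 0) (hf : ContDiffAt ℝ 1 f x₀)
    (hf₀ : f x₀ = 0) (hg : ∇ f x₀ ≠ 0) :
    signedInfDist f Γ =ᶠ[𝓝 x₀] t := by
  filter_upwards [h.eventually_infDist_eq_abs_height hΓ hΓf hf hf₀ hg,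
    h.eventually_nonneg_iff_height_nonneg hf hg] with y hdist hsign
  rw [signedInfDist, hdist]
  split_ifs with hfy
  · exact abs_of_nonneg (hsign.1 hfy)
  · rw [abs_of_neg (not_le.1 (mt hsign.2 hfy)), neg_neg]

end IsCollarChart

theorem exists_isCollarChart_signedInfDist_eventuallyEq {k : ℕ} (hk : k ≠ 0) (hΓ : IsClosed Γ)
    (hΓf : ∀ᶠ x in 𝓝 x₀, x ∈ Γ ↔ f x = 0) (hf : ContDiffAt ℝ (k + 1) f x₀) (hf₀ : f x₀ = 0)
    (hg : ∇ f x₀ ≠ 0) :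
    ∃ P t, IsCollarChart k f (unitNormal f) x₀ P t ∧ signedInfDist f Γ =ᶠ[𝓝 x₀] t := by
  obtain ⟨P, t, h⟩ := exists_isCollarChart (mod_cast hk) (hf.of_le le_self_add)
    (contDiffAt_unitNormal hf hg) hf₀ (fderiv_unitNormal_pos hg).ne'
  exact ⟨P, t, h,
    h.signedInfDist_eventuallyEq_height hΓ hΓf (hf.of_le le_add_self) hf₀ hg⟩

theorem contDiffAt_signedInfDist {k : ℕ} (hk : k ≠ 0) (hΓ : IsClosed Γ)
    (hΓf : ∀ᶠ x in 𝓝 x₀, x ∈ Γ ↔ f x = 0) (hf : ContDiffAt ℝ (k + 1) f x₀) (hf₀ : f x₀ = 0)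
    (hg : ∇ f x₀ ≠ 0) :
    ContDiffAt ℝ (k + 1) (signedInfDist f Γ) x₀ := by
  obtain ⟨P, t, h, hsd⟩ := exists_isCollarChart_signedInfDist_eventuallyEq hk hΓ hΓf hf hf₀ hg
  exact (h.contDiffAt_height_succ hk hf hg).congr_of_eventuallyEq hsd

theorem hasGradientAt_signedInfDist (hΓ : IsClosed Γ) (hΓf : ∀ᶠ x in 𝓝 x₀, x ∈ Γ ↔ f x = 0)
    (hf : ContDiffAt ℝ 2 f x₀) (hf₀ : f x₀ = 0) (hg : ∇ f x₀ ≠ 0) :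
    HasGradientAt (signedInfDist f Γ) (unitNormal f x₀) x₀ := by
  have hf' : ContDiffAt ℝ ((1 : ℕ) + 1) f x₀ := by rwa [Nat.cast_one, one_add_one_eq_two]
  obtain ⟨P, t, h, hsd⟩ :=
    exists_isCollarChart_signedInfDist_eventuallyEq one_ne_zero hΓ hΓf hf' hf₀ hg
  simpa only [h.foot_self] using
    (h.eventually_hasGradientAt_height one_ne_zero hf' hg).self_of_nhds.congr_of_eventuallyEq hsd

theorem signedDist_contDiff_of_regular_level_set_general {k : ℕ} (hk : k ≠ 0) {V : Set E}
    (hΓne : Γ.Nonempty) (hΓc : IsCompact Γ) (hV : IsOpen V)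
    (hf : ContDiffOn ℝ (k + 1) f V) (hΓ : Γ = {x ∈ V | f x = 0})
    (hgrad : ∀ x ∈ Γ, fderiv ℝ f x ≠ 0) :
    ∃ r : ℝ, 0 < r ∧ {y | infDist y Γ < r} ⊆ V ∧
      ContDiffOn ℝ (k + 1) (signedInfDist f Γ) {y | infDist y Γ < r} ∧
      ∀ x ∈ Γ, ∇ (signedInfDist f Γ) x = unitNormal f x := by
  have hΓV : ∀ x ∈ Γ, x ∈ V ∧ f x = 0 := fun x hx => by rwa [hΓ] at hx
  have hlocal : ∀ x ∈ Γ, ∀ᶠ y in 𝓝 x, y ∈ Γ ↔ f y = 0 := fun x hx => by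
    filter_upwards [hV.mem_nhds (hΓV x hx).1] with y hy
    exact ⟨fun hyΓ => (hΓV y hyΓ).2, fun hfy => hΓ ▸ ⟨hy, hfy⟩⟩
  have hfΓ : ∀ x ∈ Γ, ContDiffAt ℝ (k + 1) f x := fun x hx =>
    hf.contDiffAt (hV.mem_nhds (hΓV x hx).1)
  have hg : ∀ x ∈ Γ, ∇ f x ≠ 0 := fun x hx => by simpa [gradient] using hgrad x hx
  have hopen : IsOpen {x | ContDiffAt ℝ (k + 1) (signedInfDist f Γ) x} :=
    isOpen_iff_mem_nhds.2 fun x hx => ContDiffAt.eventually hx (by simp)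
  obtain ⟨r, hr, hsub⟩ := hΓc.exists_thickening_subset_open (hV.inter hopen) fun x hx =>
    ⟨(hΓV x hx).1, contDiffAt_signedInfDist hk hΓc.isClosed (hlocal x hx) (hfΓ x hx)
      (hΓV x hx).2 (hg x hx)⟩
  have hreg : ∀ y ∈ thickening r Γ, y ∈ V ∧ ContDiffAt ℝ (k + 1) (signedInfDist f Γ) y :=
    fun y hy => hsub hy
  have htube : {y | infDist y Γ < r} = thickening r Γ :=
    Set.ext fun y => (mem_thickening_iff_infDist_lt hΓne).symm
  have htwo : (2 : ℕ∞ω) ≤ k + 1 := mod_cast Nat.succ_le_succ (Nat.one_le_iff_ne_zero.2 hk)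
  refine ⟨r, hr, ?_⟩
  rw [htube]
  exact ⟨fun y hy => (hreg y hy).1, fun y hy => (hreg y hy).2.contDiffWithinAt, fun x hx =>
    (hasGradientAt_signedInfDist hΓc.isClosed (hlocal x hx) ((hfΓ x hx).of_le htwo)
      (hΓV x hx).2 (hg x hx)).gradient⟩

end SignedDistance

/-- Regularity of the signed distance to a compact regular level set (Euclidean case of
Proposition 2.1 (a)–(c)): if `Γ = {f = 0} ⊆ V` is compact with `∇f ≠ 0` on `Γ` and `f`
is `C²` on the open set `V`, then on a small open tube around `Γ` the signed distance
function is `C²`, and its gradient on `Γ` is the unit normal `∇f/|∇f|`. -/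
theorem signedDist_contDiff_of_regular_level_set
    (n : ℕ) (hn : 2 ≤ n) (Γ V : Set (EuclideanSpace ℝ (Fin n)))
    (hΓne : Γ.Nonempty) (hΓc : IsCompact Γ) (hV : IsOpen V) (hΓV : Γ ⊆ V)
    (f : EuclideanSpace ℝ (Fin n) → ℝ) (hf : ContDiffOn ℝ 2 f V)
    (hΓ : Γ = {x ∈ V | f x = 0})
    (hgrad : ∀ x ∈ Γ, fderiv ℝ f x ≠ 0) :
    ∃ r : ℝ, 0 < r ∧
      {y : EuclideanSpace ℝ (Fin n) | Metric.infDist y Γ < r} ⊆ V ∧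
      ContDiffOn ℝ 2
        (fun y => if 0 ≤ f y then Metric.infDist y Γ else -Metric.infDist y Γ)
        {y : EuclideanSpace ℝ (Fin n) | Metric.infDist y Γ < r} ∧
      ∀ x ∈ Γ,
        gradient (fun y => if 0 ≤ f y then Metric.infDist y Γ else -Metric.infDist y Γ) x
          = ‖gradient f x‖⁻¹ • gradient f x := by
  simpa only [Nat.cast_one, one_add_one_eq_two] using!
    signedDist_contDiff_of_regular_level_set_general one_ne_zero hΓne hΓc hV
      (by simpa only [Nat.cast_one, one_add_one_eq_two] using hf) hΓ hgrad
end
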